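/- arXiv:2309.11699 — 2 statements merged into one kernel-verified Lean document; each statement's English description precedes it below -/
import Mathlib

section
/- Let δ > 0 and define the time-dependent vector field H = (t^{δ+1}/(δ+1)) ∂_x + t^δ ∂_y acting on smooth functions of (t,x,y) ∈ [0,∞) × ℝ². Then for every positive integer k, the commutator of the transport operator ∂_t + y∂_x with H^k satisfies [∂_t + y∂_x, H^k] = k δ t^{δ-1} ∂_y H^{k-1}. -/
noncomputable def px (u : ℝ → ℝ → ℝ → ℝ) : ℝ → ℝ → ℝ → ℝ :=
  fun t x y => deriv (fun x' => u t x' y) x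

noncomputable def py (u : ℝ → ℝ → ℝ → ℝ) : ℝ → ℝ → ℝ → ℝ :=
  fun t x y => deriv (fun y' => u t x y') y

noncomputable def pt (u : ℝ → ℝ → ℝ → ℝ) : ℝ → ℝ → ℝ → ℝ :=
  fun t x y => deriv (fun t' => u t' x y) t

/-- The auxiliary vector field `H = (t^{δ+1}/(δ+1)) ∂_x + t^δ ∂_y`. -/
noncomputable def Hop (δ : ℝ) (u : ℝ → ℝ → ℝ → ℝ) : ℝ → ℝ → ℝ → ℝ :=
  fun t x y => t ^ (δ + 1) / (δ + 1) * px u t x y + t ^ δ * py u t x y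

/-!
Since `t ^ (δ + 1) = t ^ δ * t`, we have `H = t ^ δ L` for the derivative `L` along the smooth
vector field `t / (δ + 1) ∂_x + ∂_y`. As `t ^ δ` commutes with `L`, `H ^ k = t ^ (δ k) L ^ k`.
The bracket `[∂_t + y ∂_x, L] = -(δ / (δ + 1)) ∂_x` commutes with `L`, so
`[∂_t + y ∂_x, L ^ k] = -k (δ / (δ + 1)) ∂_x L ^ (k - 1)`. Differentiating the factor `t ^ (δ k)`
adds `k δ t ^ (δ k - 1) L ^ k`, and the two `∂_x` terms cancel.

At `t = 0` the two-sided `deriv` depends on the values of `Real.rpow` at negative arguments.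
There `(t ^ δ) ^ k` is positively homogeneous of degree `δ k`, so its `deriv` at `0` vanishes if
`δ k ≠ 1`. If `δ k = 1`, it could be differentiable only by being linear, which forces `k = 1`.
-/

open Function VectorField
open scoped ContDiff

section LieDerivative

variable {𝕜 E F : Type*} [NontriviallyNormedField 𝕜] [NormedAddCommGroup E] [NormedSpace 𝕜 E]
  [NormedAddCommGroup F] [NormedSpace 𝕜 F] {V W Z : E → E} {f g : E → F}

variable (𝕜) in
/-- The derivative of a function along a vector field, that is, the vector field regarded as a
first-order differential operator. -/
noncomputable def lieDeriv (V : E → E) (f : E → F) : E → F :=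
  fun p => fderiv 𝕜 f p (V p)

theorem contDiff_lieDeriv {m n : ℕ∞ω} (hV : ContDiff 𝕜 n V) (hf : ContDiff 𝕜 n f)
    (hmn : m + 1 ≤ n) : ContDiff 𝕜 m (lieDeriv 𝕜 V f) :=
  (hf.fderiv_right hmn).clm_apply (hV.of_le (le_self_add.trans hmn))

theorem contDiff_iterate_lieDeriv {m n : ℕ∞ω} {k : ℕ} (hV : ContDiff 𝕜 n V)
    (hf : ContDiff 𝕜 n f) (hmn : m + k ≤ n) : ContDiff 𝕜 m ((lieDeriv 𝕜 V)^[k] f) := by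
  induction k generalizing m with
  | zero => exact hf.of_le (by simpa using hmn)
  | succ k ih =>
    rw [Nat.cast_succ, add_comm (k : ℕ∞ω), ← add_assoc] at hmn
    rw [iterate_succ_apply']
    exact contDiff_lieDeriv (hV.of_le (le_self_add.trans hmn)) (ih hmn) le_rfl

theorem lieDeriv_add_const_smul {p : E} (hf : DifferentiableAt 𝕜 f p)
    (hg : DifferentiableAt 𝕜 g p) (c : 𝕜) :
    lieDeriv 𝕜 V (f + c • g) p = lieDeriv 𝕜 V f p + c • lieDeriv 𝕜 V g p := by
  simp [lieDeriv, fderiv_add hf (hg.const_smul c), fderiv_const_smul hg]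

variable [IsRCLikeNormedField 𝕜]

theorem lieDeriv_lieDeriv {p : E} (hf : ContDiffAt 𝕜 2 f p) (hV : DifferentiableAt 𝕜 V p)
    (hW : DifferentiableAt 𝕜 W p) :
    lieDeriv 𝕜 V (lieDeriv 𝕜 W f) p =
      lieDeriv 𝕜 W (lieDeriv 𝕜 V f) p + lieDeriv 𝕜 (lieBracket 𝕜 V W) f p :=
  sub_eq_iff_eq_add'.1 (fderiv_apply_lieBracket hf (by simp) hW hV).symm

theorem lieDeriv_comm {p : E} (hf : ContDiffAt 𝕜 2 f p) (hV : DifferentiableAt 𝕜 V p)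
    (hW : DifferentiableAt 𝕜 W p) (hVW : lieBracket 𝕜 V W p = 0) :
    lieDeriv 𝕜 V (lieDeriv 𝕜 W f) p = lieDeriv 𝕜 W (lieDeriv 𝕜 V f) p := by
  rw [lieDeriv_lieDeriv hf hV hW, add_eq_left, lieDeriv, hVW, map_zero]

theorem lieDeriv_lieDeriv_of_lieBracket_eq_smul {c : 𝕜} {p : E} (hf : ContDiffAt 𝕜 2 f p)
    (hV : DifferentiableAt 𝕜 V p) (hW : DifferentiableAt 𝕜 W p)
    (hVW : lieBracket 𝕜 V W p = c • Z p) :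
    lieDeriv 𝕜 V (lieDeriv 𝕜 W f) p =
      lieDeriv 𝕜 W (lieDeriv 𝕜 V f) p + c • lieDeriv 𝕜 Z f p := by
  rw [lieDeriv_lieDeriv hf hV hW]
  simp only [lieDeriv, hVW, map_smul]

theorem lieDeriv_iterate_lieDeriv {c : 𝕜} {k : ℕ} (hV : ContDiff 𝕜 (k + 2 : ℕ) V)
    (hW : ContDiff 𝕜 (k + 2 : ℕ) W) (hZ : ContDiff 𝕜 (k + 2 : ℕ) Z)
    (hVW : lieBracket 𝕜 V W = c • Z) (hWZ : lieBracket 𝕜 W Z = 0)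
    (hf : ContDiff 𝕜 (k + 2 : ℕ) f) :
    lieDeriv 𝕜 V ((lieDeriv 𝕜 W)^[k + 1] f) =
      (lieDeriv 𝕜 W)^[k + 1] (lieDeriv 𝕜 V f) +
        ((k + 1) * c) • lieDeriv 𝕜 Z ((lieDeriv 𝕜 W)^[k] f) := by
  have hV' : Differentiable 𝕜 V := hV.differentiable (by simp)
  have hW' : Differentiable 𝕜 W := hW.differentiable (by simp)
  have hZ' : Differentiable 𝕜 Z := hZ.differentiable (by simp)
  induction k with
  | zero =>
    funext p
    simpa using lieDeriv_lieDeriv_of_lieBracket_eq_smul (mod_cast hf.contDiffAt) (hV' p)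
      (hW' p) (congrFun hVW p)
  | succ k ih =>
    have hle : ((k + 2 : ℕ) : ℕ∞ω) ≤ (k + 1 + 2 : ℕ) := by norm_cast; omega
    have hWk : ContDiff 𝕜 2 ((lieDeriv 𝕜 W)^[k] f) :=
      contDiff_iterate_lieDeriv hW hf (by norm_cast; omega)
    have hWk_succ : ContDiff 𝕜 2 ((lieDeriv 𝕜 W)^[k + 1] f) :=
      contDiff_iterate_lieDeriv hW hf (by norm_cast; omega)
    have hVf : ContDiff 𝕜 (k + 2 : ℕ) (lieDeriv 𝕜 V f) :=
      contDiff_lieDeriv hV hf (by norm_cast)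
    have hWV : ContDiff 𝕜 1 ((lieDeriv 𝕜 W)^[k + 1] (lieDeriv 𝕜 V f)) :=
      contDiff_iterate_lieDeriv (hW.of_le hle) hVf (by norm_cast; omega)
    have hZW : ContDiff 𝕜 1 (lieDeriv 𝕜 Z ((lieDeriv 𝕜 W)^[k] f)) :=
      contDiff_lieDeriv (hZ.of_le (by norm_cast; omega)) hWk (by norm_num)
    funext p
    rw [iterate_succ_apply' _ (k + 1) f,
      lieDeriv_lieDeriv_of_lieBracket_eq_smul hWk_succ.contDiffAt (hV' p) (hW' p)
        (congrFun hVW p),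
      ih (hV.of_le hle) (hW.of_le hle) (hZ.of_le hle) (hf.of_le hle),
      lieDeriv_add_const_smul (hWV.differentiable one_ne_zero p)
        (hZW.differentiable one_ne_zero p),
      lieDeriv_comm hWk.contDiffAt (hW' p) (hZ' p) (congrFun hWZ p),
      ← iterate_succ_apply' (lieDeriv 𝕜 W) (k + 1), ← iterate_succ_apply' (lieDeriv 𝕜 W) k,
      add_assoc, ← add_smul, Pi.add_apply, Pi.smul_apply, Nat.cast_succ, add_one_mul (k + 1 : 𝕜)]

end LieDerivative

section RpowDeriv

theorem rpow_add_one_of_ne {t a : ℝ} (h : t ≠ 0 ∨ a + 1 ≠ 0) : t ^ (a + 1) = t ^ a * t := by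
  rcases eq_or_ne t 0 with rfl | ht
  · rw [Real.zero_rpow (h.neg_resolve_left rfl), mul_zero]
  · exact Real.rpow_add_one ht a

theorem mul_rpow_of_pos_left {r : ℝ} (hr : 0 < r) (t a : ℝ) : (r * t) ^ a = r ^ a * t ^ a := by
  rcases le_or_gt 0 t with ht | ht
  · exact Real.mul_rpow hr.le ht
  · rw [Real.rpow_def_of_neg (mul_neg_of_pos_of_neg hr ht), Real.rpow_def_of_neg ht,
      Real.rpow_def_of_pos hr, Real.log_mul hr.ne' ht.ne, add_mul, Real.exp_add, mul_assoc]

theorem neg_one_rpow (a : ℝ) : (-1 : ℝ) ^ a = Real.cos (a * Real.pi) := by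
  simp [Real.rpow_def_of_neg (neg_one_lt_zero (R := ℝ))]

theorem deriv_zero_of_homogeneous {f : ℝ → ℝ} {a : ℝ} (ha : a ≠ 1)
    (hf : ∀ r > 0, ∀ t, f (r * t) = r ^ a * f t) : deriv f 0 = 0 := by
  have h := deriv_comp_mul_left 2 f 0
  simp only [hf 2 two_pos, deriv_const_mul_field, mul_zero, smul_eq_mul] at h
  have h2 : (2 : ℝ) ^ a ≠ 2 := by
    simpa using (Real.rpow_right_inj two_pos (by norm_num)).not.2 ha
  exact (mul_eq_mul_right_iff.1 h).resolve_left h2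

theorem eq_mul_deriv_zero_of_homogeneous {f : ℝ → ℝ} (hf : ∀ r > 0, ∀ t, f (r * t) = r * f t)
    (hd : DifferentiableAt ℝ f 0) (t : ℝ) : f t = t * deriv f 0 := by
  have hf0 : f 0 = 0 := by
    have := hf 2 two_pos 0
    rw [mul_zero] at this
    linarith
  have hray : HasDerivAt (fun r => f (r * t)) (t * deriv f 0) 0 := by
    rw [mul_comm]
    exact HasDerivAt.comp (h₂ := f) 0 (by simpa using hd) (hasDerivAt_mul_const t)
  refine tendsto_nhds_unique (tendsto_const_nhds.congr' ?_) hray.tendsto_slope_zero_right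
  filter_upwards [self_mem_nhdsWithin] with r (hr : 0 < r)
  simp [hf r hr, hf0, hr.ne']

theorem neg_one_rpow_pow_ne_neg_one {a : ℝ} {n : ℕ} (han : a * n = 1) (hn : n ≠ 1) :
    ((-1 : ℝ) ^ a) ^ n ≠ -1 := by
  intro h
  have hn0 : n ≠ 0 := by
    rintro rfl
    simp at han
  have hcos : |Real.cos (a * Real.pi)| = 1 := by
    rw [← pow_eq_one_iff_of_nonneg (abs_nonneg _) hn0, ← abs_pow, ← neg_one_rpow, h, abs_neg,
      abs_one]
  obtain ⟨m, hm⟩ := Real.abs_cos_eq_one_iff.1 hcos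
  have hma : (m : ℝ) = a := mul_right_cancel₀ Real.pi_ne_zero hm
  have hmn : m * n = 1 := by
    rw [← hma] at han
    exact_mod_cast han
  exact hn (Nat.dvd_one.1 (Int.natCast_dvd_natCast.1 (Dvd.intro_left m hmn)))

theorem deriv_rpow_pow_zero {a : ℝ} {n : ℕ} (h : ¬(a = 1 ∧ n = 1)) :
    deriv (fun t : ℝ => (t ^ a) ^ n) 0 = 0 := by
  have hom (r : ℝ) (hr : r > 0) (t : ℝ) :
      ((r * t) ^ a) ^ n = r ^ (a * n) * (t ^ a) ^ n := by
    rw [mul_rpow_of_pos_left hr, mul_pow, Real.rpow_mul hr.le, Real.rpow_natCast]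
  by_cases han : a * n = 1
  · by_contra hne
    simp only [han, Real.rpow_one] at hom
    have hlin := eq_mul_deriv_zero_of_homogeneous hom (differentiableAt_of_deriv_ne_zero hne)
    have hn : n ≠ 1 := by
      rintro rfl
      exact h ⟨by simpa using han, rfl⟩
    refine neg_one_rpow_pow_ne_neg_one han hn ?_
    have hpos := hlin 1
    have hneg := hlin (-1)
    simp only [Real.one_rpow, one_pow] at hpos
    linarith
  · exact deriv_zero_of_homogeneous han hom

theorem deriv_rpow_pow_succ {a t : ℝ} (h : t ≠ 0 ∨ 0 < a) (n : ℕ) :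
    deriv (fun s : ℝ => (s ^ a) ^ (n + 1)) t = (n + 1) * a * t ^ (a - 1) * (t ^ a) ^ n := by
  rcases eq_or_ne t 0 with rfl | ht
  · by_cases h1 : a = 1 ∧ n = 0
    · obtain ⟨rfl, rfl⟩ := h1
      simp
    · rw [deriv_rpow_pow_zero (by simpa using h1), Real.zero_rpow (h.neg_resolve_left rfl).ne']
      rcases not_and_or.1 h1 with ha | hn
      · simp [Real.zero_rpow (sub_ne_zero.2 ha)]
      · simp [hn]
  · rw [((Real.hasDerivAt_rpow_const (p := a) (Or.inl ht)).fun_pow (n + 1)).deriv]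
    push_cast
    ring

-- When `g a ≠ 0`, dividing by `g` shows that `φ * g` is differentiable at `a` only if `φ` is, so
-- otherwise both sides take the junk value `0`.
theorem deriv_mul_of_continuousAt_of_eq_zero {𝕜 : Type*} [NontriviallyNormedField 𝕜]
    {φ g : 𝕜 → 𝕜} {a : 𝕜} (hφ : ContinuousAt φ a) (hφa : φ a = 0)
    (hg : DifferentiableAt 𝕜 g a) : deriv (fun t => φ t * g t) a = deriv φ a * g a := by
  by_cases hd : DifferentiableAt 𝕜 φ a
  · rw [deriv_fun_mul hd hg, hφa, zero_mul, add_zero]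
  rw [deriv_zero_of_not_differentiableAt hd, zero_mul]
  by_cases hga : g a = 0
  · refine HasDerivAt.deriv (hasDerivAt_iff_tendsto_slope.2 ?_)
    have hslope := (hφ.tendsto.mono_left nhdsWithin_le_nhds).mul hg.hasDerivAt.tendsto_slope
    rw [hφa, zero_mul] at hslope
    refine hslope.congr fun t => ?_
    simp only [slope_def_field, hga, hφa]
    ring
  · refine deriv_zero_of_not_differentiableAt fun hφg => hd ?_
    refine (hφg.fun_div hg hga).congr_of_eventuallyEq ?_
    filter_upwards [hg.continuousAt.eventually_ne hga] with t ht
    exact (mul_div_cancel_right₀ _ ht).symm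

theorem deriv_rpow_pow_succ_mul {a t : ℝ} (h : t ≠ 0 ∨ 0 < a) (n : ℕ) {g : ℝ → ℝ}
    (hg : DifferentiableAt ℝ g t) :
    deriv (fun s => (s ^ a) ^ (n + 1) * g s) t =
      (n + 1) * a * t ^ (a - 1) * (t ^ a) ^ n * g t + (t ^ a) ^ (n + 1) * deriv g t := by
  rw [← deriv_rpow_pow_succ h]
  rcases eq_or_ne t 0 with rfl | ht
  · have ha : 0 < a := h.neg_resolve_left rfl
    have hzero : ((0 : ℝ) ^ a) ^ (n + 1) = 0 := by simp [Real.zero_rpow ha.ne']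
    have hcont : ContinuousAt (fun s : ℝ => (s ^ a) ^ (n + 1)) 0 :=
      (Real.continuousAt_rpow_const 0 a (Or.inr ha.le)).pow _
    rw [deriv_mul_of_continuousAt_of_eq_zero hcont hzero hg, hzero, zero_mul, add_zero]
  · exact deriv_fun_mul ((Real.differentiableAt_rpow_const_of_ne a ht).fun_pow _) hg

end RpowDeriv

section KineticOperators

variable {u : ℝ → ℝ → ℝ → ℝ}

/-- The transport operator `∂_t + y ∂_x`. -/
noncomputable def transport (u : ℝ → ℝ → ℝ → ℝ) : ℝ → ℝ → ℝ → ℝ :=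
  fun t x y => pt u t x y + y * px u t x y

/-- The transport operator `∂_t + y ∂_x` as a vector field on the space of `(t, x, y)`. -/
def transportField : ℝ × ℝ × ℝ → ℝ × ℝ × ℝ :=
  fun p => (1, p.2.2, 0)

/-- The smooth vector field `t / (δ + 1) ∂_x + ∂_y`, for which `H` is `t ^ δ` times the derivative
along it. -/
noncomputable def shearField (δ : ℝ) : ℝ × ℝ × ℝ → ℝ × ℝ × ℝ :=
  fun p => (0, p.1 / (δ + 1), 1)

/-- The coordinate vector field `∂_x`. -/
def xField : ℝ × ℝ × ℝ → ℝ × ℝ × ℝ :=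
  fun _ => (0, 1, 0)

theorem contDiff_transportField {n : ℕ∞ω} : ContDiff ℝ n transportField := by
  unfold transportField
  fun_prop

theorem contDiff_shearField {n : ℕ∞ω} (δ : ℝ) : ContDiff ℝ n (shearField δ) := by
  unfold shearField
  fun_prop

theorem contDiff_xField {n : ℕ∞ω} : ContDiff ℝ n xField :=
  contDiff_const

theorem fderiv_transportField_apply (p v : ℝ × ℝ × ℝ) :
    fderiv ℝ transportField p v = (0, v.2.2, 0) := by
  have hy : HasFDerivAt (fun p : ℝ × ℝ × ℝ => p.2.2) _ p :=
    (hasFDerivAt_snd (𝕜 := ℝ) (p := p)).snd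
  have h : HasFDerivAt transportField _ p :=
    (hasFDerivAt_const (1 : ℝ) p).prodMk (hy.prodMk (hasFDerivAt_const (0 : ℝ) p))
  simp [h.fderiv]

theorem fderiv_shearField_apply (δ : ℝ) (p v : ℝ × ℝ × ℝ) :
    fderiv ℝ (shearField δ) p v = (0, v.1 / (δ + 1), 0) := by
  have ht : HasFDerivAt (fun p : ℝ × ℝ × ℝ => p.1 / (δ + 1)) _ p :=
    (hasFDerivAt_fst (𝕜 := ℝ) (p := p)).mul_const (δ + 1)⁻¹
  have h : HasFDerivAt (shearField δ) _ p :=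
    (hasFDerivAt_const (0 : ℝ) p).prodMk (ht.prodMk (hasFDerivAt_const (1 : ℝ) p))
  simp [h.fderiv, div_eq_inv_mul]

theorem lieBracket_transportField_shearField {δ : ℝ} (hδ : δ ≠ -1) :
    lieBracket ℝ transportField (shearField δ) = (-(δ / (δ + 1))) • xField := by
  have hδ' : δ + 1 ≠ 0 := fun h => hδ (eq_neg_of_add_eq_zero_left h)
  funext p
  simp only [lieBracket, fderiv_transportField_apply, fderiv_shearField_apply]
  simp only [transportField, shearField, xField, Pi.smul_apply, Prod.mk_sub_mk, Prod.smul_mk,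
    smul_eq_mul, Prod.mk.injEq]
  refine ⟨by simp, ?_, by simp⟩
  field_simp
  ring

theorem lieBracket_shearField_xField (δ : ℝ) : lieBracket ℝ (shearField δ) xField = 0 := by
  funext p
  have hx : fderiv ℝ xField p = 0 := fderiv_const_apply _
  simp [lieBracket, fderiv_shearField_apply, hx, xField]

theorem fderiv_uncurry_apply {t x y : ℝ} (hu : DifferentiableAt ℝ ↿u (t, x, y)) (a b c : ℝ) :
    fderiv ℝ ↿u (t, x, y) (a, b, c) = a * pt u t x y + b * px u t x y + c * py u t x y := by
  have ht : pt u t x y = fderiv ℝ ↿u (t, x, y) (1, 0, 0) :=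
    (hu.hasFDerivAt.comp_hasDerivAt (f := fun s => (s, x, y)) t
      ((hasDerivAt_id t).prodMk (hasDerivAt_const t (x, y)))).deriv
  have hx : px u t x y = fderiv ℝ ↿u (t, x, y) (0, 1, 0) :=
    (hu.hasFDerivAt.comp_hasDerivAt (f := fun s => (t, s, y)) x
      ((hasDerivAt_const x t).prodMk ((hasDerivAt_id x).prodMk (hasDerivAt_const x y)))).deriv
  have hy : py u t x y = fderiv ℝ ↿u (t, x, y) (0, 0, 1) :=
    (hu.hasFDerivAt.comp_hasDerivAt (f := fun s => (t, x, s)) y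
      ((hasDerivAt_const y t).prodMk ((hasDerivAt_const y x).prodMk (hasDerivAt_id y)))).deriv
  have hsplit : ((a, b, c) : ℝ × ℝ × ℝ) =
      a • ((1, 0, 0) : ℝ × ℝ × ℝ) + b • ((0, 1, 0) : ℝ × ℝ × ℝ) + c • ((0, 0, 1) : ℝ × ℝ × ℝ) := by
    simp
  simp only [ht, hx, hy, hsplit, map_add, map_smul, smul_eq_mul]

theorem lieDeriv_xField_apply {t x y : ℝ} (hu : DifferentiableAt ℝ ↿u (t, x, y)) :
    lieDeriv ℝ xField ↿u (t, x, y) = px u t x y := by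
  simp [lieDeriv, xField, fderiv_uncurry_apply hu]

theorem lieDeriv_shearField_apply (δ : ℝ) {t x y : ℝ}
    (hu : DifferentiableAt ℝ ↿u (t, x, y)) :
    lieDeriv ℝ (shearField δ) ↿u (t, x, y) = t / (δ + 1) * px u t x y + py u t x y := by
  simp [lieDeriv, shearField, fderiv_uncurry_apply hu]

theorem lieDeriv_transportField_apply {t x y : ℝ} (hu : DifferentiableAt ℝ ↿u (t, x, y)) :
    lieDeriv ℝ transportField ↿u (t, x, y) = transport u t x y := by
  simp [lieDeriv, transportField, fderiv_uncurry_apply hu, transport]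

theorem uncurry_transport (hu : Differentiable ℝ ↿u) :
    ↿(transport u) = lieDeriv ℝ transportField ↿u :=
  funext fun p => (lieDeriv_transportField_apply (hu p)).symm

theorem Hop_eq_rpow_mul_lieDeriv {δ : ℝ} (hδ : δ ≠ -1) {t x y : ℝ}
    (hu : DifferentiableAt ℝ ↿u (t, x, y)) :
    Hop δ u t x y = t ^ δ * lieDeriv ℝ (shearField δ) ↿u (t, x, y) := by
  have hδ' : δ + 1 ≠ 0 := fun h => hδ (eq_neg_of_add_eq_zero_left h)
  rw [lieDeriv_shearField_apply δ hu, Hop, rpow_add_one_of_ne (Or.inr hδ')]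
  ring

theorem Hop_mul_time (δ : ℝ) (φ : ℝ → ℝ) (v : ℝ → ℝ → ℝ → ℝ) :
    Hop δ (fun t x y => φ t * v t x y) = fun t x y => φ t * Hop δ v t x y := by
  funext t x y
  simp only [Hop, px, py, deriv_const_mul_field]
  ring

theorem iterate_Hop {δ : ℝ} (hδ : δ ≠ -1) {k : ℕ} (hu : ContDiff ℝ k ↿u) :
    (Hop δ)^[k] u =
      fun t x y => (t ^ δ) ^ k * (lieDeriv ℝ (shearField δ))^[k] ↿u (t, x, y) := by
  induction k with
  | zero =>
    funext t x y
    simp [HasUncurry.uncurry]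
  | succ k ih =>
    have hk : ContDiff ℝ 1 ((lieDeriv ℝ (shearField δ))^[k] ↿u) :=
      contDiff_iterate_lieDeriv (contDiff_shearField δ) hu (by norm_cast; omega)
    rw [iterate_succ_apply', iterate_succ_apply', ih (hu.of_le (by simp)),
      Hop_mul_time δ (fun t => (t ^ δ) ^ k)]
    funext t x y
    rw [Hop_eq_rpow_mul_lieDeriv hδ (hk.differentiable one_ne_zero (t, x, y)), ← mul_assoc,
      ← pow_succ]
    rfl

theorem transport_rpow_pow_succ_mul {δ t : ℝ} (h : t ≠ 0 ∨ 0 < δ) (n : ℕ) {x y : ℝ}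
    {v : ℝ → ℝ → ℝ → ℝ} (hv : DifferentiableAt ℝ (fun s => v s x y) t) :
    transport (fun t x y => (t ^ δ) ^ (n + 1) * v t x y) t x y =
      (n + 1) * δ * t ^ (δ - 1) * (t ^ δ) ^ n * v t x y +
        (t ^ δ) ^ (n + 1) * transport v t x y := by
  simp only [transport, pt, px, deriv_const_mul_field, deriv_rpow_pow_succ_mul h n hv]
  ring

end KineticOperators

theorem commutator_transport_Hk_general {δ : ℝ} (hδ : δ ≠ -1) {k : ℕ} {u : ℝ → ℝ → ℝ → ℝ}
    (hu : ContDiff ℝ (k + 2 : ℕ) ↿u) {t : ℝ} (ht : t ≠ 0 ∨ 0 < δ) (x y : ℝ) :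
    transport ((Hop δ)^[k + 1] u) t x y - (Hop δ)^[k + 1] (transport u) t x y =
      (k + 1) * δ * t ^ (δ - 1) * py ((Hop δ)^[k] u) t x y := by
  have huT : ContDiff ℝ (k + 1 : ℕ) ↿(transport u) := by
    rw [uncurry_transport (hu.differentiable (by simp))]
    exact contDiff_lieDeriv contDiff_transportField hu (by norm_cast)
  let v (i : ℕ) : ℝ → ℝ → ℝ → ℝ := fun t x y => (lieDeriv ℝ (shearField δ))^[i] ↿u (t, x, y)
  have hv {i : ℕ} (hi : i ≤ k + 1) : Differentiable ℝ ↿(v i) :=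
    (contDiff_iterate_lieDeriv (m := 1) (contDiff_shearField δ) hu
      (by norm_cast; omega)).differentiable one_ne_zero
  have hshear : v (k + 1) t x y = t / (δ + 1) * px (v k) t x y + py (v k) t x y := by
    rw [← lieDeriv_shearField_apply δ (hv k.le_succ _)]
    exact congrFun (iterate_succ_apply' (lieDeriv ℝ (shearField δ)) k ↿u) (t, x, y)
  have hcomm : transport (v (k + 1)) t x y =
      (lieDeriv ℝ (shearField δ))^[k + 1] ↿(transport u) (t, x, y) +
        (k + 1) * -(δ / (δ + 1)) * px (v k) t x y := by
    rw [uncurry_transport (hu.differentiable (by simp)),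
      ← lieDeriv_transportField_apply (hv le_rfl _), ← lieDeriv_xField_apply (hv k.le_succ _)]
    exact congrFun (lieDeriv_iterate_lieDeriv contDiff_transportField (contDiff_shearField δ)
      contDiff_xField (lieBracket_transportField_shearField hδ) (lieBracket_shearField_xField δ)
      hu) (t, x, y)
  have hvt : DifferentiableAt ℝ (fun s => v (k + 1) s x y) t :=
    (hv le_rfl (t, x, y)).comp t (f := fun s => (s, x, y)) (by fun_prop)
  have hpy : py (fun t x y => (t ^ δ) ^ k * v k t x y) t x y = (t ^ δ) ^ k * py (v k) t x y :=
    deriv_const_mul_field _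
  have hpow : t ^ δ = t ^ (δ - 1) * t := by
    simpa using rpow_add_one_of_ne (a := δ - 1) (ht.imp_right fun h => by simpa using h.ne')
  rw [iterate_Hop hδ (hu.of_le (by norm_cast; omega)), iterate_Hop hδ huT,
    iterate_Hop hδ (hu.of_le (by norm_cast; omega)), hpy,
    transport_rpow_pow_succ_mul ht k (v := v (k + 1)) hvt, hcomm, hshear]
  linear_combination (k + 1) * (δ / (δ + 1)) * (t ^ δ) ^ k * px (v k) t x y * -hpow

/-- Commutator identity `[∂_t + y∂_x, H^k] u = k δ t^{δ-1} ∂_y H^{k-1} u`. -/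
theorem commutator_transport_Hk (δ : ℝ) (hδ : 0 < δ) (k : ℕ) (hk : 1 ≤ k)
    (u : ℝ → ℝ → ℝ → ℝ)
    (hu : ContDiff ℝ (⊤ : ℕ∞) (fun p : ℝ × ℝ × ℝ => u p.1 p.2.1 p.2.2))
    (t x y : ℝ) (ht : 0 ≤ t) :
    (pt ((Hop δ)^[k] u) t x y + y * px ((Hop δ)^[k] u) t x y)
      - ((Hop δ)^[k] (fun t' x' y' => pt u t' x' y' + y' * px u t' x' y')) t x y
      = (k : ℝ) * δ * t ^ (δ - 1) * py ((Hop δ)^[k - 1] u) t x y := by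
  obtain ⟨k, rfl⟩ := Nat.exists_eq_add_of_le' hk
  rw [Nat.cast_succ, Nat.add_sub_cancel]
  exact commutator_transport_Hk_general (by linarith) (contDiff_infty.1 hu (k + 2)) (Or.inr hδ) x y
end

section
/- Let T > 0, δ > 0, C > 0, C₁ > 0. Let a(t,x,y) be smooth with a ≥ C₁ and ‖∂_x^α ∂_y^β a(t)‖_{L^∞(ℝ²)} ≤ C^{α+β+1} α! β! for all α, β ∈ ℕ, t ∈ [0,T]. Let H = (t^{δ+1}/(δ+1))∂_x + t^δ ∂_y. Then for every u ∈ C^∞([0,T]; S(ℝ²)), every t ∈ [0,T], and every k ≥ 2: −(∂_y H^k(a ∂_y u), H^k u)_{L²(ℝ²)} ≥ C₁ ‖∂_y H^k u(t)‖²_{L²} − Σ_{j=1}^{k} C(k,j) (8C(T+1)^{δ+1})^{j+1} (j−2)! ‖∂_y H^{k−j} u(t)‖_{L²} ‖∂_y H^k u(t)‖_{L²}. -/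
open MeasureTheory

/-- The `L²(ℝ²)` norm of the slice at time `t`. -/
noncomputable def L2slice (f : ℝ → ℝ → ℝ → ℝ) (t : ℝ) : ℝ :=
  Real.sqrt (∫ p : ℝ × ℝ, (f t p.1 p.2) ^ 2)

/-!
The field `H` contains no `∂_t`, so at a fixed time it is a directional derivative of the plane with
constant coefficients: a derivation of the algebra of smooth functions which commutes with `∂_y`.
Expand `H^k (a ∂_y u)` by the Leibniz formula and integrate each term by parts in `y`. The term
without derivatives on `a` is `∫ a (∂_y H^k u)²`, which `a ≥ C₁` bounds below; the others are
controlled by Cauchy–Schwarz and `‖H^j a‖_∞`. Since the summands of `H` commute, the binomial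
theorem turns the analytic bounds on `∂_x^α ∂_y^β a` into `|H^j a| ≤ C^{j+1} M^j (j+1)!`, where `M`
bounds the coefficients of `H`, and `(j+1)! ≤ 8^{j+1} (j-2)!`.
-/

open scoped Manifold ContDiff Nat

section Leibniz

open Finset

theorem derivation_iterate_mul {R A : Type*} [CommSemiring R] [CommSemiring A] [Algebra R A]
    (D : Derivation R A A) (k : ℕ) (a b : A) :
    D^[k] (a * b) = ∑ j ∈ range (k + 1), k.choose j • (D^[j] a * D^[k - j] b) := by
  rw [← Nat.sum_antidiagonal_eq_sum_range_succ fun i j => k.choose i • (D^[i] a * D^[j] b)]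
  induction k with
  | zero => simp
  | succ k ih =>
    rw [sum_antidiagonal_choose_succ_nsmul (fun i j => D^[i] a * D^[j] b), ← sum_add_distrib,
      Function.iterate_succ_apply', ih, map_sum]
    refine sum_congr rfl fun ij hij => ?_
    rw [← Nat.choose_symm_of_eq_add (mem_antidiagonal.mp hij).symm, ← smul_add, map_nsmul,
      D.leibniz, smul_eq_mul, smul_eq_mul, Function.iterate_succ_apply',
      Function.iterate_succ_apply', mul_comm (D^[ij.2] b)]

end Leibniz

section LTwo

variable {α : Type*} [MeasurableSpace α] {μ : Measure α} {b f g : α → ℝ} {c K : ℝ}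

/-- The `L²` norm of a real function, as a real number; it has the junk value `0` when `f` is not
square integrable. -/
noncomputable def l2Norm (f : α → ℝ) (μ : Measure α) : ℝ :=
  √(∫ x, f x ^ 2 ∂μ)

theorem integral_abs_mul_le_l2Norm (hf : MemLp f 2 μ) (hg : MemLp g 2 μ) :
    ∫ x, |f x * g x| ∂μ ≤ l2Norm f μ * l2Norm g μ := by
  have := integral_mul_norm_le_Lp_mul_Lq Real.HolderConjugate.two_two
    (by simpa using hf) (by simpa using hg)
  simpa only [l2Norm, Real.rpow_two, Real.norm_eq_abs, sq_abs, ← Real.sqrt_eq_rpow, ← abs_mul]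
    using this

theorem mul_sq_l2Norm_le_integral (hc : ∀ x, c ≤ b x) (hf : MemLp f 2 μ)
    (hbf : Integrable (fun x => b x * (f x * f x)) μ) :
    c * l2Norm f μ ^ 2 ≤ ∫ x, b x * (f x * f x) ∂μ := by
  rw [l2Norm, Real.sq_sqrt (integral_nonneg fun x => sq_nonneg _), ← integral_const_mul]
  refine integral_mono (hf.integrable_sq.const_mul c) hbf fun x => ?_
  simpa only [sq] using mul_le_mul_of_nonneg_right (hc x) (mul_self_nonneg (f x))

theorem abs_integral_mul_mul_le [Nonempty α] (hb : ∀ x, |b x| ≤ K) (hf : MemLp f 2 μ)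
    (hg : MemLp g 2 μ) :
    |∫ x, b x * (f x * g x) ∂μ| ≤ K * (l2Norm f μ * l2Norm g μ) := by
  have hK : 0 ≤ K := (abs_nonneg _).trans (hb (Classical.arbitrary α))
  calc |∫ x, b x * (f x * g x) ∂μ|
      ≤ ∫ x, K * |f x * g x| ∂μ := by
        rw [← Real.norm_eq_abs]
        refine norm_integral_le_of_norm_le ((hf.integrable_mul hg).abs.const_mul K)
          (.of_forall fun x => ?_)
        rw [Real.norm_eq_abs, abs_mul]
        exact mul_le_mul_of_nonneg_right (hb x) (abs_nonneg _)
    _ = K * ∫ x, |f x * g x| ∂μ := integral_const_mul _ _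
    _ ≤ K * (l2Norm f μ * l2Norm g μ) :=
        mul_le_mul_of_nonneg_left (integral_abs_mul_le_l2Norm hf hg) hK

end LTwo

/-- The `ℝ`-algebra `C^∞(E)` of smooth real functions on a normed space, seen as a manifold. -/
abbrev SmoothFunction (E : Type*) [NormedAddCommGroup E] [NormedSpace ℝ E] : Type _ :=
  C^∞⟮𝓘(ℝ, E), E; 𝓘(ℝ, ℝ), ℝ⟯

namespace SmoothFunction

variable {E : Type*} [NormedAddCommGroup E] [NormedSpace ℝ E]

section DirDeriv

variable (v w : E) (f : SmoothFunction E)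

theorem contDiff : ContDiff ℝ ∞ f := f.contMDiff.contDiff

theorem differentiable : Differentiable ℝ f := f.contDiff.differentiable (by simp)

theorem contDiff_fderiv : ContDiff ℝ ∞ (fderiv ℝ f) := f.contDiff.fderiv_right (by simp)

/-- The directional derivative along `v`, as a derivation of `C^∞(E)`. -/
noncomputable def dirDeriv : Derivation ℝ (SmoothFunction E) (SmoothFunction E) :=
  Derivation.mk'
    { toFun f := ⟨fun p => fderiv ℝ f p v,
        (f.contDiff_fderiv.clm_apply contDiff_const).contMDiff⟩
      map_add' f g := by
        ext p
        change fderiv ℝ (⇑f + ⇑g) p v = fderiv ℝ f p v + fderiv ℝ g p v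
        rw [fderiv_add (f.differentiable p) (g.differentiable p), add_apply]
      map_smul' c f := by
        ext p
        change fderiv ℝ (c • ⇑f) p v = c • fderiv ℝ f p v
        rw [fderiv_const_smul (f.differentiable p), smul_apply] }
    fun f g => by
      ext p
      change fderiv ℝ (⇑f * ⇑g) p v = f p * fderiv ℝ g p v + g p * fderiv ℝ f p v
      rw [fderiv_mul (f.differentiable p) (g.differentiable p)]
      rfl

theorem dirDeriv_apply (p : E) : dirDeriv v f p = fderiv ℝ f p v := rfl

theorem commute_dirDeriv : Function.Commute (dirDeriv v) (dirDeriv w) := by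
  intro f
  ext p
  have dirDeriv_dirDeriv (v w : E) :
      dirDeriv v (dirDeriv w f) p = fderiv ℝ (fderiv ℝ f) p v w := by
    change fderiv ℝ (fun q => fderiv ℝ f q w) p v = _
    rw [fderiv_clm_apply (f.contDiff_fderiv.differentiable (by simp) p)
      (differentiableAt_const w)]
    simp
  rw [dirDeriv_dirDeriv, dirDeriv_dirDeriv]
  exact f.contDiff.contDiffAt.isSymmSndFDerivAt
    (by simpa using WithTop.coe_le_coe.mpr (le_top : (2 : ℕ∞) ≤ ⊤)) v w

theorem dirDeriv_smul_add_smul (P Q : ℝ) :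
    dirDeriv (P • v + Q • w) = P • dirDeriv v + Q • dirDeriv w := by
  ext f p
  simp [dirDeriv_apply]

theorem iterate_dirDeriv_smul_add_smul (P Q : ℝ) (j : ℕ) :
    (dirDeriv (P • v + Q • w))^[j] f = ∑ i ∈ Finset.range (j + 1),
      (j.choose i * (P ^ i * Q ^ (j - i))) • (dirDeriv v)^[i] ((dirDeriv w)^[j - i] f) := by
  have commute : Commute (P • (dirDeriv v).toLinearMap) (Q • (dirDeriv w).toLinearMap) :=
    Commute.smul_left (Commute.smul_right (LinearMap.ext fun f => commute_dirDeriv v w f) Q) P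
  have toLinearMap_eq : (dirDeriv (P • v + Q • w)).toLinearMap =
      P • (dirDeriv v).toLinearMap + Q • (dirDeriv w).toLinearMap :=
    congrArg Derivation.toLinearMap (dirDeriv_smul_add_smul v w P Q)
  change (dirDeriv (P • v + Q • w)).toLinearMap^[j] f = _
  rw [← Module.End.pow_apply, toLinearMap_eq, commute.add_pow, LinearMap.sum_apply]
  refine Finset.sum_congr rfl fun i _ => ?_
  rw [← nsmul_eq_mul', smul_pow, smul_pow, smul_mul_smul_comm, LinearMap.smul_apply,
    LinearMap.smul_apply, Module.End.mul_apply, Module.End.pow_apply, Module.End.pow_apply,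
    mul_smul, mul_smul, mul_smul, Nat.cast_smul_eq_nsmul]
  rfl

variable {v} in
theorem hasDerivAt_comp {γ : ℝ → E} {s : ℝ} (hγ : HasDerivAt γ v s) :
    HasDerivAt (fun r => f (γ r)) (dirDeriv v f (γ s)) s :=
  (f.differentiable (γ s)).hasFDerivAt.comp_hasDerivAt s hγ

end DirDeriv

section Bounds

variable (E) in
/-- The subspace of bounded functions in `C^∞(E)`; their derivatives may be unbounded. -/
def boundedFunctions : Submodule ℝ (SmoothFunction E) where
  carrier := {f | ∃ K, ∀ p, |f p| ≤ K}
  add_mem' := by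
    rintro f g ⟨K, hK⟩ ⟨L, hL⟩
    exact ⟨K + L, fun p => (abs_add_le _ _).trans (add_le_add (hK p) (hL p))⟩
  zero_mem' := ⟨0, fun _ => abs_zero.le⟩
  smul_mem' := by
    rintro c f ⟨K, hK⟩
    exact ⟨|c| * K, fun p =>
      (abs_mul c (f p)).trans_le (mul_le_mul_of_nonneg_left (hK p) (abs_nonneg c))⟩

variable {v w : E} {f : SmoothFunction E}

theorem iterate_dirDeriv_mem_boundedFunctions
    (hf : ∀ m n, (dirDeriv v)^[m] ((dirDeriv w)^[n] f) ∈ boundedFunctions E) (P Q : ℝ) (j : ℕ) :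
    (dirDeriv (P • v + Q • w))^[j] f ∈ boundedFunctions E := by
  rw [iterate_dirDeriv_smul_add_smul]
  exact Submodule.sum_mem _ fun i _ => Submodule.smul_mem _ _ (hf i (j - i))

theorem sum_apply {ι : Type*} (s : Finset ι) (F : ι → SmoothFunction E) (p : E) :
    (∑ i ∈ s, F i) p = ∑ i ∈ s, F i p :=
  map_sum (ContMDiffMap.evalRingHom p) F s

theorem abs_iterate_dirDeriv_le_of_analytic {P Q C M : ℝ} {p : E} (hP : |P| ≤ M) (hQ : |Q| ≤ M)
    (hf : ∀ m n, |(dirDeriv v)^[m] ((dirDeriv w)^[n] f) p| ≤ C ^ (m + n + 1) * m ! * n !)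
    (j : ℕ) :
    |(dirDeriv (P • v + Q • w))^[j] f p| ≤ C ^ (j + 1) * M ^ j * (j + 1)! := by
  have : 0 ≤ C := (abs_nonneg _).trans (by simpa using hf 0 0)
  have hM : 0 ≤ M := (abs_nonneg P).trans hP
  have abs_term_le (i : ℕ) (hi : i ∈ Finset.range (j + 1)) :
      |j.choose i * (P ^ i * Q ^ (j - i)) * (dirDeriv v)^[i] ((dirDeriv w)^[j - i] f) p|
        ≤ C ^ (j + 1) * M ^ j * j ! := by
    obtain ⟨n, rfl⟩ := Nat.exists_eq_add_of_le (Finset.mem_range_succ_iff.mp hi)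
    have choose_mul : ((i + n).choose i : ℝ) * i ! * n ! = (i + n)! := by
      exact_mod_cast Nat.add_sub_cancel_left (n := i) (m := n) ▸
        Nat.choose_mul_factorial_mul_factorial (Nat.le_add_right i n)
    rw [Nat.add_sub_cancel_left, abs_mul, abs_mul, abs_mul, abs_pow, abs_pow, Nat.abs_cast]
    calc (i + n).choose i * (|P| ^ i * |Q| ^ n) * |(dirDeriv v)^[i] ((dirDeriv w)^[n] f) p|
        ≤ (i + n).choose i * (M ^ i * M ^ n) * (C ^ (i + n + 1) * i ! * n !) := by
          gcongr
          exact hf i n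
      _ = C ^ (i + n + 1) * M ^ (i + n) * (i + n)! := by rw [← choose_mul, pow_add M]; ring
  calc |(dirDeriv (P • v + Q • w))^[j] f p|
      ≤ ∑ _i ∈ Finset.range (j + 1), C ^ (j + 1) * M ^ j * j ! := by
        rw [iterate_dirDeriv_smul_add_smul, sum_apply]
        exact (Finset.abs_sum_le_sum_abs _ _).trans (Finset.sum_le_sum abs_term_le)
    _ = C ^ (j + 1) * M ^ j * (j + 1)! := by
        rw [Finset.sum_const, Finset.card_range, nsmul_eq_mul, Nat.factorial_succ]
        push_cast
        ring

end Bounds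

/-- Smooth functions which are Schwartz functions. -/
def IsSchwartz (f : SmoothFunction E) : Prop :=
  ∃ ψ : SchwartzMap E ℝ, ⇑f = ψ

section Schwartz

variable {b f g : SmoothFunction E}

theorem IsSchwartz.dirDeriv (hf : IsSchwartz f) (v : E) : IsSchwartz (dirDeriv v f) := by
  obtain ⟨ψ, hψ⟩ := hf
  refine ⟨LineDeriv.lineDerivOp v ψ, funext fun p => ?_⟩
  rw [dirDeriv_apply, hψ, SchwartzMap.lineDerivOp_apply_eq_fderiv]

theorem IsSchwartz.iterate_dirDeriv (hf : IsSchwartz f) (v : E) (j : ℕ) :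
    IsSchwartz ((SmoothFunction.dirDeriv v)^[j] f) :=
  Function.Iterate.rec IsSchwartz hf (fun _ h => h.dirDeriv v) j

variable [MeasurableSpace E] [BorelSpace E] [FiniteDimensional ℝ E]
  {μ : Measure E} [μ.IsAddHaarMeasure]

theorem IsSchwartz.memLp_two (hf : IsSchwartz f) : MemLp f 2 μ := by
  obtain ⟨ψ, hψ⟩ := hf
  exact hψ ▸ ψ.memLp 2 μ

theorem integrable_mul_mul (hb : b ∈ boundedFunctions E) (hf : IsSchwartz f)
    (hg : IsSchwartz g) : Integrable (fun p => b p * (f p * g p)) μ := by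
  obtain ⟨K, hK⟩ := hb
  exact (hf.memLp_two.integrable_mul hg.memLp_two).bdd_mul (c := K)
    b.contDiff.continuous.aestronglyMeasurable (.of_forall hK)

variable {v : E}

theorem integrable_dirDeriv_mul_mul (hb : b ∈ boundedFunctions E)
    (hb' : dirDeriv v b ∈ boundedFunctions E) (hf : IsSchwartz f) (hg : IsSchwartz g) :
    Integrable (fun p => dirDeriv v (b * f) p * g p) μ := by
  refine ((integrable_mul_mul hb (hf.dirDeriv v) hg).add
    (integrable_mul_mul hb' hf hg)).congr (.of_forall fun p => ?_)
  rw [(SmoothFunction.dirDeriv v).leibniz]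
  change b p * (SmoothFunction.dirDeriv v f p * g p)
      + SmoothFunction.dirDeriv v b p * (f p * g p)
    = (b p * SmoothFunction.dirDeriv v f p + f p * SmoothFunction.dirDeriv v b p) * g p
  ring

theorem integral_dirDeriv_mul_mul (hb : b ∈ boundedFunctions E)
    (hb' : dirDeriv v b ∈ boundedFunctions E) (hf : IsSchwartz f) (hg : IsSchwartz g) :
    ∫ p, dirDeriv v (b * f) p * g p ∂μ = -∫ p, b p * (f p * dirDeriv v g p) ∂μ := by
  have integrable_left := integrable_dirDeriv_mul_mul (μ := μ) hb hb' hf hg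
  have integrable_right := integrable_mul_mul (μ := μ) hb hf (hg.dirDeriv v)
  have integrable_mul := integrable_mul_mul (μ := μ) hb hf hg
  simp only [← mul_assoc] at integrable_right integrable_mul ⊢
  exact neg_eq_iff_eq_neg.mp (integral_mul_fderiv_eq_neg_fderiv_mul_of_integrable
    integrable_left integrable_right integrable_mul
    (fun p _ => (b * f).differentiable p) (fun p _ => g.differentiable p)).symm

section Coercivity

variable {w : E}

theorem neg_integral_dirDeriv_iterate_mul (hb : ∀ j, (dirDeriv w)^[j] b ∈ boundedFunctions E)
    (hb' : ∀ j, dirDeriv v ((dirDeriv w)^[j] b) ∈ boundedFunctions E) (hf : IsSchwartz f)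
    (hg : IsSchwartz g) (k : ℕ) :
    -∫ p, dirDeriv v ((dirDeriv w)^[k] (b * dirDeriv v f)) p * g p ∂μ
      = ∑ j ∈ Finset.range (k + 1), (k.choose j : ℝ) *
          ∫ p, (dirDeriv w)^[j] b p
            * (dirDeriv v ((dirDeriv w)^[k - j] f) p * dirDeriv v g p) ∂μ := by
  have dirDeriv_iterate_mul : dirDeriv v ((dirDeriv w)^[k] (b * dirDeriv v f))
      = ∑ j ∈ Finset.range (k + 1), k.choose j •
          dirDeriv v ((dirDeriv w)^[j] b * dirDeriv v ((dirDeriv w)^[k - j] f)) := by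
    rw [derivation_iterate_mul, map_sum]
    refine Finset.sum_congr rfl fun j _ => ?_
    rw [map_nsmul, ((commute_dirDeriv w v).iterate_left (k - j)) f]
  have isSchwartz (j : ℕ) := (hf.iterate_dirDeriv w (k - j)).dirDeriv v
  have integrable (j : ℕ) :=
    integrable_dirDeriv_mul_mul (μ := μ) (hb j) (hb' j) (isSchwartz j) hg
  calc -∫ p, dirDeriv v ((dirDeriv w)^[k] (b * dirDeriv v f)) p * g p ∂μ
      = -∫ p, ∑ j ∈ Finset.range (k + 1), (k.choose j : ℝ) *
          (dirDeriv v ((dirDeriv w)^[j] b * dirDeriv v ((dirDeriv w)^[k - j] f)) p * g p) ∂μ := by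
        simp only [dirDeriv_iterate_mul, sum_apply, Finset.sum_mul, ← mul_assoc,
          ← Nat.cast_smul_eq_nsmul ℝ]
        rfl
    _ = _ := by
        rw [integral_finsetSum _ fun j _ => (integrable j).const_mul _, ← Finset.sum_neg_distrib]
        refine Finset.sum_congr rfl fun j _ => ?_
        rw [integral_const_mul, integral_dirDeriv_mul_mul (hb j) (hb' j) (isSchwartz j) hg,
          mul_neg, neg_neg]

theorem coercivity_dirDeriv_iterate {c : ℝ} {K : ℕ → ℝ} (hc : ∀ p, c ≤ b p)
    (hK : ∀ j p, |(dirDeriv w)^[j] b p| ≤ K j)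
    (hb' : ∀ j, dirDeriv v ((dirDeriv w)^[j] b) ∈ boundedFunctions E) (hf : IsSchwartz f)
    (k : ℕ) :
    c * l2Norm (dirDeriv v ((dirDeriv w)^[k] f)) μ ^ 2
        - ∑ j ∈ Finset.Icc 1 k, k.choose j * K j * l2Norm (dirDeriv v ((dirDeriv w)^[k - j] f)) μ
            * l2Norm (dirDeriv v ((dirDeriv w)^[k] f)) μ
      ≤ -∫ p, dirDeriv v ((dirDeriv w)^[k] (b * dirDeriv v f)) p * (dirDeriv w)^[k] f p ∂μ := by
  have hb (j : ℕ) : (dirDeriv w)^[j] b ∈ boundedFunctions E := ⟨K j, hK j⟩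
  have isSchwartz (j : ℕ) := (hf.iterate_dirDeriv w j).dirDeriv v
  have main_term_ge : c * l2Norm (dirDeriv v ((dirDeriv w)^[k] f)) μ ^ 2
      ≤ ∫ p, b p * (dirDeriv v ((dirDeriv w)^[k] f) p * dirDeriv v ((dirDeriv w)^[k] f) p) ∂μ :=
    mul_sq_l2Norm_le_integral hc (isSchwartz k).memLp_two
      (integrable_mul_mul (hb 0) (isSchwartz k) (isSchwartz k))
  have commutator_term_ge (j : ℕ) :
      -(k.choose j * K j * l2Norm (dirDeriv v ((dirDeriv w)^[k - j] f)) μ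
          * l2Norm (dirDeriv v ((dirDeriv w)^[k] f)) μ)
        ≤ k.choose j * ∫ p, (dirDeriv w)^[j] b p * (dirDeriv v ((dirDeriv w)^[k - j] f) p
            * dirDeriv v ((dirDeriv w)^[k] f) p) ∂μ := by
    rw [mul_assoc, mul_assoc, ← mul_neg]
    exact mul_le_mul_of_nonneg_left (neg_le_of_abs_le (abs_integral_mul_mul_le (hK j)
      (isSchwartz (k - j)).memLp_two (isSchwartz k).memLp_two)) (Nat.cast_nonneg _)
  rw [neg_integral_dirDeriv_iterate_mul hb hb' hf (hf.iterate_dirDeriv w k),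
    Finset.sum_range_eq_add_Ico _ k.succ_pos, sub_eq_add_neg, ← Finset.sum_neg_distrib]
  exact add_le_add (by simpa using main_term_ge)
    (Finset.sum_le_sum fun j _ => commutator_term_ge j)

end Coercivity

end Schwartz

end SmoothFunction

open SmoothFunction

section Slice

/-- The slice `g t` at the fixed time `t` is the smooth function `f` of the plane. -/
def HasSlice (g : ℝ → ℝ → ℝ → ℝ) (t : ℝ) (f : SmoothFunction (ℝ × ℝ)) : Prop :=
  ∀ x y, g t x y = f (x, y)

variable {g g' : ℝ → ℝ → ℝ → ℝ} {t : ℝ} {f f' : SmoothFunction (ℝ × ℝ)}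

theorem HasSlice.px (hg : HasSlice g t f) : HasSlice (px g) t (dirDeriv (1, 0) f) := by
  intro x y
  simp only [_root_.px, hg _ _]
  exact (f.hasDerivAt_comp ((hasDerivAt_id x).prodMk (hasDerivAt_const x y))).deriv

theorem HasSlice.py (hg : HasSlice g t f) : HasSlice (py g) t (dirDeriv (0, 1) f) := by
  intro x y
  simp only [_root_.py, hg _ _]
  exact (f.hasDerivAt_comp ((hasDerivAt_const y x).prodMk (hasDerivAt_id y))).deriv

/-- The direction of the vector field `H` at time `t`, which is the same at every point of the
plane: on slices, `H` acts as the derivative along `hopDir δ t`. -/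
noncomputable def hopDir (δ t : ℝ) : ℝ × ℝ :=
  (t ^ (δ + 1) / (δ + 1)) • (1, 0) + t ^ δ • (0, 1)

theorem HasSlice.hop (hg : HasSlice g t f) (δ : ℝ) :
    HasSlice (Hop δ g) t (dirDeriv (hopDir δ t) f) := by
  intro x y
  rw [hopDir, dirDeriv_smul_add_smul, Hop, hg.px x y, hg.py x y]
  rfl

theorem HasSlice.mul (hg : HasSlice g t f) (hg' : HasSlice g' t f') :
    HasSlice (fun t x y => g t x y * g' t x y) t (f * f') :=
  fun x y => congrArg₂ (· * ·) (hg x y) (hg' x y)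

theorem HasSlice.iterate {F : (ℝ → ℝ → ℝ → ℝ) → ℝ → ℝ → ℝ → ℝ}
    {D : SmoothFunction (ℝ × ℝ) → SmoothFunction (ℝ × ℝ)}
    (hF : ∀ {g f}, HasSlice g t f → HasSlice (F g) t (D f)) (hg : HasSlice g t f) (j : ℕ) :
    HasSlice (F^[j] g) t (D^[j] f) := by
  induction j with
  | zero => exact hg
  | succ j ih => simpa only [Function.iterate_succ_apply'] using hF ih

theorem HasSlice.L2slice_eq (hg : HasSlice g t f) : L2slice g t = l2Norm f volume := by
  simp only [L2slice, l2Norm, hg _ _]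

end Slice

-- Truncated subtraction realises the convention `(-1)! = 1` at `j = 1`.
theorem factorial_succ_le_eight_pow_mul (j : ℕ) : (j + 1)! ≤ 8 ^ (j + 1) * (j - 2)! := by
  match j with
  | 0 => simp
  | 1 => simp
  | n + 2 =>
    have : n + 3 ≤ 2 ^ (n + 3) := Nat.lt_two_pow_self.le
    calc (n + 3)! = (n + 3) * (n + 2) * (n + 1) * n ! := by simp only [Nat.factorial_succ]; ring
      _ ≤ 2 ^ (n + 3) * 2 ^ (n + 3) * 2 ^ (n + 3) * n ! := by gcongr <;> omega
      _ = 8 ^ (n + 3) * n ! := by rw [← mul_pow, ← mul_pow]; norm_num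

section HopCoefficients

variable {T δ t : ℝ}

theorem abs_rpow_add_one_div_le (hδ : 0 ≤ δ) (ht : t ∈ Set.Icc 0 T) :
    |t ^ (δ + 1) / (δ + 1)| ≤ (T + 1) ^ (δ + 1) := by
  have := Real.rpow_nonneg ht.1 (δ + 1)
  rw [abs_of_nonneg (by positivity)]
  exact (div_le_self this (by linarith)).trans
    (Real.rpow_le_rpow ht.1 (by linarith [ht.2]) (by linarith))

theorem abs_rpow_le_rpow_add_one (hδ : 0 ≤ δ) (ht : t ∈ Set.Icc 0 T) :
    |t ^ δ| ≤ (T + 1) ^ (δ + 1) := by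
  rw [abs_of_nonneg (Real.rpow_nonneg ht.1 δ)]
  exact (Real.rpow_le_rpow ht.1 (by linarith [ht.2]) hδ).trans
    (Real.rpow_le_rpow_of_exponent_le (by linarith [ht.1, ht.2]) (by linarith))

theorem abs_iterate_dirDeriv_hopDir_le {C : ℝ} {b : SmoothFunction (ℝ × ℝ)} {p : ℝ × ℝ}
    (hδ : 0 ≤ δ) (ht : t ∈ Set.Icc 0 T)
    (hb : ∀ m n, |(dirDeriv (1, 0))^[m] ((dirDeriv (0, 1))^[n] b) p|
      ≤ C ^ (m + n + 1) * m ! * n !) (j : ℕ) :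
    |(dirDeriv (hopDir δ t))^[j] b p| ≤ (8 * C * (T + 1) ^ (δ + 1)) ^ (j + 1) * (j - 2)! := by
  have hC : 0 ≤ C := (abs_nonneg _).trans (by simpa using hb 0 0)
  have hM : 1 ≤ (T + 1) ^ (δ + 1) :=
    Real.one_le_rpow (by linarith [ht.1, ht.2]) (by linarith)
  set M := (T + 1) ^ (δ + 1)
  calc |(dirDeriv (hopDir δ t))^[j] b p|
      ≤ C ^ (j + 1) * M ^ j * (j + 1)! :=
        abs_iterate_dirDeriv_le_of_analytic (abs_rpow_add_one_div_le hδ ht)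
          (abs_rpow_le_rpow_add_one hδ ht) hb j
    _ ≤ C ^ (j + 1) * M ^ (j + 1) * (8 ^ (j + 1) * (j - 2)!) := by
        gcongr
        · exact j.le_succ
        · exact_mod_cast factorial_succ_le_eight_pow_mul j
    _ = (8 * C * M) ^ (j + 1) * (j - 2)! := by rw [mul_pow, mul_pow]; ring

end HopCoefficients

theorem coercivity_Hk_general {T δ C C₁ t : ℝ} {a u : ℝ → ℝ → ℝ → ℝ} (hδ : 0 ≤ δ)
    (ht : t ∈ Set.Icc 0 T) (ha_smooth : ContDiff ℝ ∞ fun p : ℝ × ℝ => a t p.1 p.2)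
    (ha_lb : ∀ x y, C₁ ≤ a t x y)
    (ha_bd : ∀ α β x y, |(px^[α] (py^[β] a)) t x y| ≤ C ^ (α + β + 1) * α ! * β !)
    (hu : ∃ v : SchwartzMap (ℝ × ℝ) ℝ, ∀ x y, u t x y = v (x, y)) (k : ℕ) :
    C₁ * L2slice (py ((Hop δ)^[k] u)) t ^ 2
        - ∑ j ∈ Finset.Icc 1 k, k.choose j * (8 * C * (T + 1) ^ (δ + 1)) ^ (j + 1) * (j - 2)!
            * L2slice (py ((Hop δ)^[k - j] u)) t * L2slice (py ((Hop δ)^[k] u)) t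
      ≤ -∫ p : ℝ × ℝ, py ((Hop δ)^[k] fun t x y => a t x y * py u t x y) t p.1 p.2
          * (Hop δ)^[k] u t p.1 p.2 := by
  obtain ⟨ψ, hψ⟩ := hu
  let b : SmoothFunction (ℝ × ℝ) := ⟨fun p => a t p.1 p.2, ha_smooth.contMDiff⟩
  let f : SmoothFunction (ℝ × ℝ) := ⟨ψ, (ψ.smooth ⊤).contMDiff⟩
  have hb : HasSlice a t b := fun _ _ => rfl
  have hf : HasSlice u t f := hψ
  have hb_bd (m n : ℕ) (p : ℝ × ℝ) : |(dirDeriv (1, 0))^[m] ((dirDeriv (0, 1))^[n] b) p|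
      ≤ C ^ (m + n + 1) * m ! * n ! := by
    rw [← ((hb.iterate HasSlice.py n).iterate HasSlice.px m) p.1 p.2]
    exact ha_bd m n p.1 p.2
  have hb_py_bd (j : ℕ) :
      dirDeriv (0, 1) ((dirDeriv (hopDir δ t))^[j] b) ∈ boundedFunctions (ℝ × ℝ) := by
    rw [← ((commute_dirDeriv _ _).iterate_left j) b]
    exact iterate_dirDeriv_mem_boundedFunctions (fun m n => ⟨_, hb_bd m (n + 1)⟩) _ _ j
  have hop_iterate_u (j : ℕ) := hf.iterate (fun h => h.hop δ) j
  have hop_iterate_flux := (hb.mul hf.py).iterate (fun h => h.hop δ) k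
  simpa only [(hop_iterate_u _).py.L2slice_eq, hop_iterate_flux.py _ _, hop_iterate_u k _ _,
    ← mul_assoc] using coercivity_dirDeriv_iterate (μ := volume) (fun p => ha_lb p.1 p.2)
      (fun j p => abs_iterate_dirDeriv_hopDir_le hδ ht (hb_bd · · p) j) hb_py_bd ⟨ψ, rfl⟩ k

/-- Lower bound for `-(∂_y H^k (a ∂_y u), H^k u)_{L²(ℝ²)}`. -/
theorem coercivity_Hk (T δ C C₁ : ℝ) (hT : 0 < T) (hδ : 0 < δ) (hC : 0 < C) (hC₁ : 0 < C₁)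
    (a u : ℝ → ℝ → ℝ → ℝ)
    (ha_smooth : ContDiff ℝ (⊤ : ℕ∞) (fun p : ℝ × ℝ × ℝ => a p.1 p.2.1 p.2.2))
    (ha_lb : ∀ t x y : ℝ, C₁ ≤ a t x y)
    (ha_bd : ∀ α β : ℕ, ∀ t ∈ Set.Icc (0 : ℝ) T, ∀ x y : ℝ,
      |(px^[α] (py^[β] a)) t x y| ≤ C ^ (α + β + 1) * (Nat.factorial α) * (Nat.factorial β))
    (hu_smooth : ContDiff ℝ (⊤ : ℕ∞) (fun p : ℝ × ℝ × ℝ => u p.1 p.2.1 p.2.2))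
    (hu_schwartz : ∀ t : ℝ, ∃ v : SchwartzMap (ℝ × ℝ) ℝ, ∀ x y : ℝ, u t x y = v (x, y))
    (k : ℕ) (hk : 2 ≤ k) :
    ∀ t ∈ Set.Icc (0 : ℝ) T,
      C₁ * (L2slice (py ((Hop δ)^[k] u)) t) ^ 2
        - ∑ j ∈ Finset.Icc 1 k,
            (k.choose j : ℝ) * (8 * C * (T + 1) ^ (δ + 1)) ^ (j + 1)
              * (Nat.factorial (j - 2))
              * L2slice (py ((Hop δ)^[k - j] u)) t
              * L2slice (py ((Hop δ)^[k] u)) t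
      ≤ -∫ p : ℝ × ℝ,
          (py ((Hop δ)^[k] (fun t' x' y' => a t' x' y' * py u t' x' y'))) t p.1 p.2
            * ((Hop δ)^[k] u) t p.1 p.2 :=
  fun _ ht => coercivity_Hk_general hδ.le ht
    (ha_smooth.comp (contDiff_const.prodMk contDiff_id)) (ha_lb _) (fun α β => ha_bd α β _ ht)
    (hu_schwartz _) k
end
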